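/- arXiv:1210.3349 — 3 statements merged into one kernel-verified Lean document; each statement's English description precedes it below -/
import Mathlib

section
/- If p ≥ 3 is prime, p does not divide k, and p divides n, then f_{n,k} ≡ 0 (mod p), where f_{n,k} is the number of k-angulations of a convex n-gon. -/
/-- The `i`-th vertex of the regular `n`-gon inscribed in the unit circle. -/
noncomputable def polygonVertex (n i : ℕ) : ℝ × ℝ :=
  (Real.cos (2 * Real.pi * i / n), Real.sin (2 * Real.pi * i / n))

/-- The convex hull of the vertices of a cell `c ⊆ {0, ..., n-1}`. -/
noncomputable def cellHull (n : ℕ) (c : Finset (Fin n)) : Set (ℝ × ℝ) :=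
  convexHull ℝ ((fun i : Fin n => polygonVertex n i.val) '' (c : Set (Fin n)))

/-- A `k`-angulation of a convex (regular) `n`-gon: a collection of `k`-element vertex
subsets (the `k`-gonal cells) whose convex hulls have pairwise disjoint interiors and
together cover the polygon. -/
def IsKAngulation (n k : ℕ) (S : Finset (Finset (Fin n))) : Prop :=
  (∀ c ∈ S, c.card = k) ∧
  (⋃ c ∈ S, cellHull n c) =
    convexHull ℝ (Set.range fun i : Fin n => polygonVertex n i.val) ∧
  ∀ c ∈ S, ∀ c' ∈ S, c ≠ c' → interior (cellHull n c) ∩ interior (cellHull n c') = ∅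

/-- `f_{n,k}`, the number of `k`-angulations of a convex `n`-gon. -/
noncomputable def numKAngulations (n k : ℕ) : ℕ :=
  Nat.card {S : Finset (Finset (Fin n)) // IsKAngulation n k S}

open Real in
/-- Vertices of the polygon are pairwise distinct. -/
lemma polygonVertex_inj (n : ℕ) (hn : 0 < n) (i j : Fin n)
    (h : polygonVertex n i.val = polygonVertex n j.val) : i = j := by
  simp only [polygonVertex, Prod.mk.injEq] at h
  have h1 := Real.Angle.cos_sin_inj h.1 h.2
  obtain ⟨q, hq⟩ := Real.Angle.angle_eq_iff_two_pi_dvd_sub.1 h1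
  have hn' : (n : ℝ) ≠ 0 := by positivity
  have hpi := Real.pi_pos
  have h2 : ((i.val : ℝ) - j.val) = n * q := by
    field_simp at hq
    have : π ≠ 0 := hpi.ne'
    linarith
  have h3 : ((i.val : ℤ) - j.val) = n * q := by exact_mod_cast h2
  have hi := i.2
  have hj := j.2
  have h4 : q = 0 := by
    by_contra hq0
    rcases lt_or_gt_of_ne hq0 with h | h
    · have : (n : ℤ) * q ≤ n * (-1) := by gcongr; omega
      omega
    · have : (n : ℤ) * 1 ≤ n * q := by gcongr; omega
      omega
  subst h4
  ext
  omega

lemma polygonVertex_circle (n i : ℕ) :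
    (polygonVertex n i).1 ^ 2 + (polygonVertex n i).2 ^ 2 = 1 := by
  simp [polygonVertex]

lemma span_top_of_det (s : Set (ℝ × ℝ)) (A B C : ℝ × ℝ) (hA : A ∈ s) (hB : B ∈ s) (hC : C ∈ s)
    (hdet : (B.1 - A.1) * (C.2 - A.2) - (B.2 - A.2) * (C.1 - A.1) ≠ 0) :
    affineSpan ℝ s = ⊤ := by
  rw [AffineSubspace.affineSpan_eq_top_iff_vectorSpan_eq_top_of_nonempty ℝ _ _ ⟨A, hA⟩]
  rw [eq_top_iff]
  rintro ⟨x, y⟩ -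
  have h1 : B - A ∈ vectorSpan ℝ s := vsub_mem_vectorSpan ℝ hB hA
  have h2 : C - A ∈ vectorSpan ℝ s := vsub_mem_vectorSpan ℝ hC hA
  set D := (B.1 - A.1) * (C.2 - A.2) - (B.2 - A.2) * (C.1 - A.1) with hD
  have h3 := Submodule.add_mem _
    (Submodule.smul_mem _ ((x * (C.2 - A.2) - y * (C.1 - A.1)) / D) h1)
    (Submodule.smul_mem _ ((y * (B.1 - A.1) - x * (B.2 - A.2)) / D) h2)
  convert h3 using 1
  ext
  · simp; field_simp; rw [hD]; ring
  · simp; field_simp; rw [hD]; ring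

lemma circle_det (A B C : ℝ × ℝ) (hA : A.1 ^ 2 + A.2 ^ 2 = 1) (hB : B.1 ^ 2 + B.2 ^ 2 = 1)
    (hC : C.1 ^ 2 + C.2 ^ 2 = 1) (hAB : A ≠ B) (hAC : A ≠ C) (hBC : B ≠ C) :
    (B.1 - A.1) * (C.2 - A.2) - (B.2 - A.2) * (C.1 - A.1) ≠ 0 := by
  obtain ⟨a, b⟩ := A
  obtain ⟨c, d⟩ := B
  obtain ⟨e, f⟩ := C
  simp only [ne_eq, Prod.mk.injEq] at *
  intro h
  have key : ∀ x y z w : ℝ, ¬ (x = z ∧ y = w) → 0 < (z - x) ^ 2 + (w - y) ^ 2 := by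
    intro x y z w h
    by_contra h'
    apply h
    constructor <;> nlinarith [sq_nonneg (z - x), sq_nonneg (w - y)]
  have k1 := key _ _ _ _ hAB
  have k2 := key _ _ _ _ hAC
  have k3 := key _ _ _ _ hBC
  obtain ⟨t, ht1, ht2⟩ : ∃ t, e - a = t * (c - a) ∧ f - b = t * (d - b) := by
    refine ⟨((e - a) * (c - a) + (f - b) * (d - b)) / ((c - a) ^ 2 + (d - b) ^ 2), ?_, ?_⟩
    · field_simp
      linear_combination -(d - b) * h
    · field_simp
      linear_combination (c - a) * h
  have he : e = a + t * (c - a) := by linarith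
  have hf : f = b + t * (d - b) := by linarith
  subst he hf
  have h5 : t * (t - 1) * ((c - a) ^ 2 + (d - b) ^ 2) = 0 := by
    linear_combination hC - (1 - t) * hA - t * hB
  rcases mul_eq_zero.1 h5 with h6 | h6
  · rcases mul_eq_zero.1 h6 with h7 | h7
    · subst h7; simp at k2
    · have : t = 1 := by linarith
      subst this; simp at k3
  · linarith

lemma cellHull_interior_nonempty (n : ℕ) (c : Finset (Fin n)) (hn : 0 < n) (hc : 3 ≤ c.card) :
    (interior (cellHull n c)).Nonempty := by
  obtain ⟨i, hi, j, hj, l, hl, hij, hil, hjl⟩ := Finset.two_lt_card.1 hc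
  rw [cellHull, interior_convexHull_nonempty_iff_affineSpan_eq_top]
  refine span_top_of_det _ (polygonVertex n i) (polygonVertex n j) (polygonVertex n l)
    ⟨i, hi, rfl⟩ ⟨j, hj, rfl⟩ ⟨l, hl, rfl⟩ ?_
  apply circle_det _ _ _ (polygonVertex_circle _ _) (polygonVertex_circle _ _)
    (polygonVertex_circle _ _)
  · exact fun h => hij (polygonVertex_inj n hn _ _ h)
  · exact fun h => hil (polygonVertex_inj n hn _ _ h)
  · exact fun h => hjl (polygonVertex_inj n hn _ _ h)

/-- Rotation of the plane by the angle `θ`. -/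
noncomputable def planeRot (θ : ℝ) : (ℝ × ℝ) ≃ₗ[ℝ] (ℝ × ℝ) where
  toFun x := (Real.cos θ * x.1 - Real.sin θ * x.2, Real.sin θ * x.1 + Real.cos θ * x.2)
  invFun x := (Real.cos θ * x.1 + Real.sin θ * x.2, - Real.sin θ * x.1 + Real.cos θ * x.2)
  map_add' x y := by ext <;> simp <;> ring
  map_smul' r x := by ext <;> simp <;> ring
  left_inv x := by
    ext <;> simp
    · linear_combination x.1 * Real.sin_sq_add_cos_sq θ
    · linear_combination x.2 * Real.sin_sq_add_cos_sq θ
  right_inv x := by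
    ext <;> simp
    · linear_combination x.1 * Real.sin_sq_add_cos_sq θ
    · linear_combination x.2 * Real.sin_sq_add_cos_sq θ

/-- The core geometric fact: a rotated cell containing the centre overlaps the original one. -/
lemma overlap (θ : ℝ) (hθ : Real.sin θ ≠ 0) (s : Set (ℝ × ℝ))
    (hs : ∀ v ∈ s, v.1 ^ 2 + v.2 ^ 2 = 1)
    (hne1 : (interior (convexHull ℝ s)).Nonempty)
    (hne2 : (interior (convexHull ℝ (planeRot θ '' s))).Nonempty)
    (h0 : (0 : ℝ × ℝ) ∈ convexHull ℝ s)
    (hdisj : interior (convexHull ℝ s) ∩ interior (convexHull ℝ (planeRot θ '' s)) = ∅) :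
    False := by
  have h0' : (0 : ℝ × ℝ) ∈ convexHull ℝ (planeRot θ '' s) := by
    have := (planeRot θ).toLinearMap.image_convexHull s
    simp only [LinearEquiv.coe_coe] at this
    rw [← this]
    exact ⟨0, h0, map_zero _⟩
  have c1 : Convex ℝ (convexHull ℝ s) := convex_convexHull ℝ s
  have c2 : Convex ℝ (convexHull ℝ (planeRot θ '' s)) := convex_convexHull ℝ _
  obtain ⟨f, u, hf1, hf2⟩ := geometric_hahn_banach_open_open c1.interior isOpen_interior
    c2.interior isOpen_interior (Set.disjoint_iff_inter_eq_empty.2 hdisj)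
  have g1 : ∀ x ∈ convexHull ℝ s, f x ≤ u := by
    intro x hx
    have hx' := subset_closure hx
    rw [← c1.closure_interior_eq_closure_of_nonempty_interior hne1] at hx'
    exact closure_minimal (t := {x | f x ≤ u}) (fun y hy => (hf1 y hy).le)
      (isClosed_le f.continuous continuous_const) hx'
  have g2 : ∀ x ∈ convexHull ℝ (planeRot θ '' s), u ≤ f x := by
    intro x hx
    have hx' := subset_closure hx
    rw [← c2.closure_interior_eq_closure_of_nonempty_interior hne2] at hx'
    exact closure_minimal (t := {x | u ≤ f x}) (fun y hy => (hf2 y hy).le)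
      (isClosed_le continuous_const f.continuous) hx'
  have u1 := g1 0 h0
  have u2 := g2 0 h0'
  rw [map_zero] at u1 u2
  have hu : u = 0 := le_antisymm u2 u1
  subst hu
  obtain ⟨v, hv, hgv⟩ : ∃ v ∈ s, f (planeRot θ v) - f v ≤ 0 := by
    by_contra! hcon
    have hl : IsLinearMap ℝ (fun x => f (planeRot θ x) - f x) :=
      ((f.toLinearMap ∘ₗ (planeRot θ).toLinearMap) - f.toLinearMap).isLinear
    have := convexHull_min (s := s) (t := {x | 0 < f (planeRot θ x) - f x}) hcon
      (convex_halfSpace_gt hl 0) h0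
    simp at this
  have a1 := g1 v (subset_convexHull ℝ _ hv)
  have a2 := g2 _ (subset_convexHull ℝ _ (Set.mem_image_of_mem _ hv))
  have b1 : f v = 0 := by linarith
  have b2 : f (planeRot θ v) = 0 := by linarith
  have hc := hs v hv
  have hf0 : ∀ x, f x = 0 := by
    intro x
    have hx : x = ((x.1 * v.1 + x.2 * v.2) -
          Real.cos θ / Real.sin θ * (x.2 * v.1 - x.1 * v.2)) • v
        + ((x.2 * v.1 - x.1 * v.2) / Real.sin θ) • planeRot θ v := by
      ext
      · simp [planeRot]
        field_simp
        linear_combination (- x.1 * Real.sin θ) * hc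
      · simp [planeRot]
        field_simp
        linear_combination (- x.2 * Real.sin θ) * hc
    rw [hx, map_add, map_smul, map_smul, b1, b2]
    simp
  obtain ⟨y, hy⟩ := hne1
  have := hf1 y hy
  rw [hf0] at this
  exact lt_irrefl _ this

/-- A self-map of order dividing `p` without fixed points. -/
lemma dvd_card_of_no_fixed {α : Type*} [Fintype α] (p : ℕ) (hp : p.Prime) (f : α → α)
    (hf : f^[p] = id) (hfix : ∀ x, f x ≠ x) : p ∣ Fintype.card α := by
  classical
  have : Fact p.Prime := ⟨hp⟩
  have h1 : (show Function.End α from f) ^ p ^ 1 = 1 := by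
    rw [pow_one]
    funext x
    have h3 : ∀ t : ℕ, ((show Function.End α from f) ^ t) x = f^[t] x := by
      intro t
      induction t with
      | zero => rfl
      | succ t ih => rw [pow_succ', Function.iterate_succ_apply', ← ih]; rfl
    rw [h3, hf]; rfl
  have h := Equiv.Perm.card_fixedPoints_modEq (n := 1) h1
  have h2 : Fintype.card (Function.fixedPoints f) = 0 := by
    rw [Fintype.card_eq_zero_iff]
    exact ⟨fun x => hfix x.1 x.2⟩
  exact (Nat.modEq_zero_iff_dvd).1 (h.trans (by rw [← h2]))

lemma polygonVertex_add (n p m i : ℕ) (hn : 0 < n) (hm : n = p * m) :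
    polygonVertex n ((i + m) % n) = planeRot (2 * Real.pi / p) (polygonVertex n i) := by
  have h0 : (n : ℝ) ≠ 0 := by positivity
  have hp : (p : ℝ) ≠ 0 := by
    rintro h; apply h0; rw [hm]; push_cast; rw [h, zero_mul]
  have hm0 : (m : ℝ) ≠ 0 := by
    rintro h; apply h0; rw [hm]; push_cast; rw [h, mul_zero]
  have h1 : (((i + m) % n : ℕ) : ℝ) = i + m - n * ((i + m) / n : ℕ) := by
    have := Nat.mod_add_div (i + m) n
    have h2 : (((i + m) % n + n * ((i + m) / n) : ℕ) : ℝ) = ((i + m : ℕ) : ℝ) := by rw [this]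
    push_cast at h2 ⊢
    linarith
  have h3 : 2 * Real.pi * (((i + m) % n : ℕ) : ℝ) / n
      = (2 * Real.pi / p + 2 * Real.pi * i / n) - ((i + m) / n : ℕ) * (2 * Real.pi) := by
    rw [h1]
    generalize ((i + m) / n : ℕ) = q
    rw [hm]; push_cast
    field_simp
    ring
  unfold polygonVertex
  rw [h3, Real.cos_sub_nat_mul_two_pi, Real.sin_sub_nat_mul_two_pi, Real.cos_add, Real.sin_add]
  simp [planeRot]

/-- The vertex shift. -/
def vshift (n m : ℕ) (hn : 0 < n) (i : Fin n) : Fin n := ⟨(i.val + m) % n, Nat.mod_lt _ hn⟩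

lemma vshift_iter (n m : ℕ) (hn : 0 < n) (t : ℕ) (i : Fin n) :
    (((vshift n m hn)^[t]) i).val = (i.val + t * m) % n := by
  induction t with
  | zero => simp [Nat.mod_eq_of_lt i.2]
  | succ t ih =>
    rw [Function.iterate_succ_apply']
    simp only [vshift] at ih ⊢
    rw [ih, Nat.mod_add_mod]
    congr 1; ring

lemma cellHull_image (n p m : ℕ) (hn : 0 < n) (hm : n = p * m) (c : Finset (Fin n)) :
    (fun i : Fin n => polygonVertex n i.val) '' ((c.image (vshift n m hn) : Finset (Fin n)) : Set (Fin n))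
      = planeRot (2 * Real.pi / p) '' ((fun i : Fin n => polygonVertex n i.val) '' (c : Set (Fin n))) := by
  rw [Finset.coe_image, Set.image_image, Set.image_image]
  apply Set.image_congr
  intro i _
  exact polygonVertex_add n p m i hn hm

lemma cellHull_rot (n p m : ℕ) (hn : 0 < n) (hm : n = p * m) (c : Finset (Fin n)) :
    cellHull n (c.image (vshift n m hn)) = planeRot (2 * Real.pi / p) '' cellHull n c := by
  rw [cellHull, cellHull_image n p m hn hm, cellHull]
  exact ((planeRot (2 * Real.pi / p)).toLinearMap.image_convexHull _).symm

lemma vshift_iter_p (n p m : ℕ) (hn : 0 < n) (hm : n = p * m) : (vshift n m hn)^[p] = id := by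
  funext i
  ext
  rw [vshift_iter, ← hm]
  simp [Nat.mod_eq_of_lt i.2]

lemma bij_of_iter {α : Type*} (f : α → α) (p : ℕ) (hp : p ≠ 0) (h : f^[p] = id) :
    Function.Bijective f := by
  obtain ⟨q, rfl⟩ := Nat.exists_eq_succ_of_ne_zero hp
  constructor
  · have : Function.Injective (f^[q] ∘ f) := by
      rw [← Function.iterate_succ, h]; exact Function.injective_id
    exact this.of_comp
  · have : Function.Surjective (f ∘ f^[q]) := by
      rw [← Function.iterate_succ', h]; exact Function.surjective_id
    exact this.of_comp

lemma image_iter {α : Type*} [DecidableEq α] (f : α → α) (t : ℕ) (c : Finset α) :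
    (fun c : Finset α => c.image f)^[t] c = c.image (f^[t]) := by
  induction t with
  | zero => simp
  | succ t ih => rw [Function.iterate_succ_apply', ih, Finset.image_image, Function.iterate_succ']

lemma polygon_rot (n p m : ℕ) (hn : 0 < n) (hp : p ≠ 0) (hm : n = p * m) :
    planeRot (2 * Real.pi / p) '' convexHull ℝ (Set.range fun i : Fin n => polygonVertex n i.val)
      = convexHull ℝ (Set.range fun i : Fin n => polygonVertex n i.val) := by
  have h := cellHull_rot n p m hn hm Finset.univ
  rw [Finset.image_univ_of_surjective (bij_of_iter _ p hp (vshift_iter_p n p m hn hm)).2] at h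
  simpa [cellHull] using h.symm

lemma isKAngulation_rot (n k p m : ℕ) (hn : 0 < n) (hp : p ≠ 0) (hm : n = p * m)
    (S : Finset (Finset (Fin n))) (hS : IsKAngulation n k S) :
    IsKAngulation n k (S.image fun c => c.image (vshift n m hn)) := by
  have hb := bij_of_iter _ p hp (vshift_iter_p n p m hn hm)
  obtain ⟨h1, h2, h3⟩ := hS
  refine ⟨?_, ?_, ?_⟩
  · simp only [Finset.forall_mem_image]
    intro c hc
    rw [Finset.card_image_of_injective _ hb.1, h1 c hc]
  · rw [Finset.set_biUnion_finset_image]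
    simp only [cellHull_rot n p m hn hm]
    rw [← Set.image_iUnion₂, h2, polygon_rot n p m hn hp hm]
  · simp only [Finset.forall_mem_image]
    intro c hc c' hc' hne
    have hne' : c ≠ c' := fun h => hne (by rw [h])
    rw [cellHull_rot n p m hn hm, cellHull_rot n p m hn hm]
    have := fun s => (planeRot (2 * Real.pi / p)).toContinuousLinearEquiv.toHomeomorph.image_interior s
    simp only [ContinuousLinearEquiv.coe_toHomeomorph, LinearEquiv.coe_toContinuousLinearEquiv'] at this
    rw [← this, ← this, ← Set.image_inter (planeRot (2 * Real.pi / p)).injective, h3 c hc c' hc' hne',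
      Set.image_empty]

lemma sin_ne (p : ℕ) (hp3 : 3 ≤ p) : Real.sin (2 * Real.pi / p) ≠ 0 := by
  have hpi := Real.pi_pos
  have h : (3 : ℝ) ≤ p := by exact_mod_cast hp3
  apply ne_of_gt
  apply Real.sin_pos_of_pos_of_lt_pi
  · positivity
  · rw [div_lt_iff₀ (by linarith)]
    nlinarith

lemma zero_mem_polygon (n p m : ℕ) (hn : 0 < n) (hp3 : 3 ≤ p) (hm : n = p * m) :
    (0 : ℝ × ℝ) ∈ convexHull ℝ (Set.range fun i : Fin n => polygonVertex n i.val) := by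
  set R := planeRot (2 * Real.pi / p) with hR
  have hb := bij_of_iter _ p (by omega) (vshift_iter_p n p m hn hm)
  set g : ℝ × ℝ := ∑ i : Fin n, (1 / (n : ℝ)) • polygonVertex n i.val with hg
  have hmem : g ∈ convexHull ℝ (Set.range fun i : Fin n => polygonVertex n i.val) := by
    apply (convex_convexHull ℝ _).sum_mem
    · intro i _; positivity
    · have : (n : ℝ) ≠ 0 := by positivity
      simp [this]
    · intro i _
      exact subset_convexHull ℝ _ ⟨i, rfl⟩
  have hfix : R g = g := by
    rw [hg, map_sum]
    simp only [map_smul]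
    rw [← hb.sum_comp (fun i : Fin n => (1 / (n : ℝ)) • polygonVertex n i.val)]
    apply Finset.sum_congr rfl
    intro i _
    simp only [vshift]
    rw [polygonVertex_add n p m i hn hm]
  have hs := sin_ne p hp3
  have hcs := Real.sin_sq_add_cos_sq (2 * Real.pi / p)
  have hg0 : g = 0 := by
    obtain ⟨x, y⟩ := g
    simp only [hR, planeRot, LinearEquiv.coe_mk, LinearMap.coe_mk, AddHom.coe_mk,
      Prod.mk.injEq] at hfix
    generalize Real.sin (2 * Real.pi / p) = s at *
    generalize Real.cos (2 * Real.pi / p) = c at *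
    obtain ⟨e1, e2⟩ := hfix
    have hs2 : 0 < s ^ 2 := by positivity
    have h1 : s ^ 2 * (x ^ 2 + y ^ 2) * 1 = (1 - c) ^ 2 * 0 + s ^ 2 * (x ^ 2 + y ^ 2) := by ring
    have hd : 0 < (c - 1) ^ 2 + s ^ 2 := by positivity
    have hx : x * ((c - 1) ^ 2 + s ^ 2) = 0 := by linear_combination (c - 1) * e1 + s * e2
    have hy : y * ((c - 1) ^ 2 + s ^ 2) = 0 := by linear_combination (c - 1) * e2 - s * e1
    have hx0 : x = 0 := by simpa [hd.ne'] using hx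
    have hy0 : y = 0 := by simpa [hd.ne'] using hy
    simp [hx0, hy0]
  rw [← hg0]
  exact hmem

/-- If `p ≥ 3` is prime, `p ∤ k` and `p ∣ n`, then `f_{n,k} ≡ 0 (mod p)`. -/
theorem numKAngulations_mod_p (n k p : ℕ) (hn : 3 ≤ n) (hk : 3 ≤ k)
    (hp : p.Prime) (hp3 : 3 ≤ p) (hpk : ¬ p ∣ k) (hpn : p ∣ n) :
    p ∣ numKAngulations n k := by
  classical
  obtain ⟨m, hm⟩ := hpn
  have hn0 : 0 < n := by omega
  have hp0 : p ≠ 0 := by omega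
  have hit := vshift_iter_p n p m hn0 hm
  rw [numKAngulations, Nat.card_eq_fintype_card]
  have hiter : ∀ (t : ℕ) (S : {S : Finset (Finset (Fin n)) // IsKAngulation n k S}),
      ((fun S : {S : Finset (Finset (Fin n)) // IsKAngulation n k S} =>
        (⟨_, isKAngulation_rot n k p m hn0 hp0 hm S.1 S.2⟩ :
          {S : Finset (Finset (Fin n)) // IsKAngulation n k S}))^[t] S).1 =
      S.1.image (fun c => c.image ((vshift n m hn0)^[t])) := by
    intro t S
    induction t with
    | zero => simp
    | succ t ih =>
      rw [Function.iterate_succ_apply']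
      refine (congrArg (Finset.image fun c => c.image (vshift n m hn0)) ih).trans ?_
      rw [Finset.image_image]
      congr 1
      funext c
      simp only [Function.comp, Finset.image_image, Function.iterate_succ']
  apply dvd_card_of_no_fixed p hp (fun S => ⟨_, isKAngulation_rot n k p m hn0 hp0 hm S.1 S.2⟩)
  · funext S
    apply Subtype.ext
    rw [hiter, hit]
    simp
  · rintro ⟨S, hS⟩ hfix
    have hfix' : (S.image fun c => c.image (vshift n m hn0)) = S := congrArg Subtype.val hfix
    have h0 := zero_mem_polygon n p m hn0 hp3 hm
    rw [← hS.2.1] at h0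
    simp only [Set.mem_iUnion] at h0
    obtain ⟨c, hc, h0c⟩ := h0
    have hc' : c.image (vshift n m hn0) ∈ S := by
      rw [← hfix']; exact Finset.mem_image_of_mem _ hc
    have hck := hS.1 c hc
    by_cases hcc : c.image (vshift n m hn0) = c
    · apply hpk
      rw [← hck, ← Fintype.card_coe]
      have hmaps : ∀ i ∈ c, vshift n m hn0 i ∈ c := by
        intro i hi
        have := Finset.mem_image_of_mem (vshift n m hn0) hi
        rwa [hcc] at this
      have hcit : ∀ (t : ℕ) (i : c), ((fun i : c => (⟨_, hmaps i.1 i.2⟩ : c))^[t] i).1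
          = (vshift n m hn0)^[t] i.1 := by
        intro t i
        induction t with
        | zero => rfl
        | succ t ih => rw [Function.iterate_succ_apply', Function.iterate_succ_apply', ← ih]
      apply dvd_card_of_no_fixed p hp (fun i : c => (⟨_, hmaps i.1 i.2⟩ : c))
      · funext i
        apply Subtype.ext
        rw [hcit, hit]
        rfl
      · rintro ⟨i, hi⟩ hfi
        have h1 : (i.val + m) % n = i.val := congrArg (fun x : c => x.1.val) hfi
        have hmpos : 0 < m := by
          rcases Nat.eq_zero_or_pos m with h | h
          · subst h; omega
          · exact h
        have hmn : m < n := by rw [hm]; nlinarith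
        have hi2 := i.2
        by_cases hlt : i.val + m < n
        · rw [Nat.mod_eq_of_lt hlt] at h1; omega
        · rw [Nat.mod_eq_sub_mod (by omega), Nat.mod_eq_of_lt (by omega)] at h1
          omega
    · have hd := hS.2.2 c hc _ hc' (Ne.symm hcc)
      have i1 := cellHull_interior_nonempty n c hn0 (by omega)
      have i2 := cellHull_interior_nonempty n _ hn0 ((hS.1 _ hc').symm ▸ hk)
      unfold cellHull at hd i1 i2 h0c
      rw [cellHull_image n p m hn0 hm] at hd i2
      refine overlap (2 * Real.pi / p) (sin_ne p hp3) _ ?_ i1 i2 h0c hd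
      rintro _ ⟨i, _, rfl⟩
      exact polygonVertex_circle _ _
end

section
/- The number of triangulations of a convex n-gon whose central component contains the vertex 0 equals C_{n-2} - ∑_{m=1}^{⌊n/2⌋ - 1} C_m * C_{n-2-m}. -/
/-- A diagonal of a convex `n`-gon with vertices `0, 1, ..., n-1`, encoded as a pair
`(a, b)` with `a < b`, joining two non-adjacent vertices. -/
def IsDiagonal (n : ℕ) (d : ℕ × ℕ) : Prop :=
  d.2 < n ∧ d.1 + 2 ≤ d.2 ∧ d.2 + 2 ≤ d.1 + n

/-- Two diagonals (each encoded as an increasing pair) cross in the interior of the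
polygon. -/
def Crossing (d e : ℕ × ℕ) : Prop :=
  (d.1 < e.1 ∧ e.1 < d.2 ∧ d.2 < e.2) ∨ (e.1 < d.1 ∧ d.1 < e.2 ∧ e.2 < d.2)

/-- A triangulation of a convex `n`-gon: a set of `n - 3` pairwise non-crossing
diagonals. -/
def IsTriangulation (n : ℕ) (T : Finset (ℕ × ℕ)) : Prop :=
  T.card = n - 3 ∧ (∀ d ∈ T, IsDiagonal n d) ∧
    ∀ d ∈ T, ∀ e ∈ T, d ≠ e → ¬ Crossing d e

/-- The central component of the triangulation `T` (the diameter or triangle containing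
the center of the regular `n`-gon) does not contain the vertex `0`: some diagonal of `T`
separates vertex `0` from the center, i.e. there is a diagonal `(a, b)` with `a ≥ 1`
whose cyclic length `b - a` is at least `n/2`. -/
def CentralAvoidsZero (n : ℕ) (T : Finset (ℕ × ℕ)) : Prop :=
  ∃ d ∈ T, 1 ≤ d.1 ∧ n ≤ 2 * (d.2 - d.1)

open BinaryTree in
/-- The set of chords (including the base chord) of the triangulation of the polygon on
`i, ..., i + t.numNodes + 1` encoded by the binary tree `t`. -/
def chords : BinaryTree Unit → ℕ → Finset (ℕ × ℕ)
  | .nil, _ => ∅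
  | .node _ l r, i =>
      insert (i, i + (l.numNodes + r.numNodes + 1) + 1)
        (chords l i ∪ chords r (i + l.numNodes + 1))

theorem mem_chords_node {u : Unit} {l r : BinaryTree Unit} {i : ℕ} {d : ℕ × ℕ} :
    d ∈ chords (.node u l r) i ↔ d = (i, i + (l.numNodes + r.numNodes + 1) + 1) ∨
      d ∈ chords l i ∨ d ∈ chords r (i + l.numNodes + 1) := by
  simp [chords]

theorem chords_bounds (t : BinaryTree Unit) : ∀ i, ∀ d ∈ chords t i,
    i ≤ d.1 ∧ d.1 + 2 ≤ d.2 ∧ d.2 ≤ i + t.numNodes + 1 := by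
  induction t with
  | nil => simp [chords]
  | node u l r hl hr =>
    intro i d hd
    rw [mem_chords_node] at hd
    simp only [BinaryTree.numNodes]
    rcases hd with rfl | hd | hd
    · dsimp only; omega
    · have := hl _ _ hd; omega
    · have := hr _ _ hd; omega

theorem chords_card (t : BinaryTree Unit) : ∀ i, (chords t i).card = t.numNodes := by
  induction t with
  | nil => simp [chords]
  | node u l r hl hr =>
    intro i
    rw [chords, Finset.card_insert_of_notMem, Finset.card_union_of_disjoint, hl, hr]
    · simp
    · rw [Finset.disjoint_left]
      intro d h1 h2
      have := chords_bounds _ _ _ h1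
      have := chords_bounds _ _ _ h2
      omega
    · intro h
      rw [Finset.mem_union] at h
      rcases h with h | h
      · have := chords_bounds _ _ _ h
        dsimp only at this; omega
      · have := chords_bounds _ _ _ h
        dsimp only at this; omega

theorem chords_noncrossing (t : BinaryTree Unit) : ∀ i, ∀ d ∈ chords t i, ∀ e ∈ chords t i,
    ¬ Crossing d e := by
  induction t with
  | nil => simp [chords]
  | node u l r hl hr =>
    intro i d hd e he hc
    have bd := chords_bounds _ _ _ hd
    have be := chords_bounds _ _ _ he
    rw [mem_chords_node] at hd he
    simp only [BinaryTree.numNodes] at bd be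
    rcases hd with rfl | hd | hd
    · simp only [Crossing] at *; omega
    · rcases he with rfl | he | he
      · simp only [Crossing] at *; omega
      · exact hl _ _ hd _ he hc
      · have := chords_bounds _ _ _ hd
        have := chords_bounds _ _ _ he
        simp only [Crossing] at *; omega
    · rcases he with rfl | he | he
      · simp only [Crossing] at *; omega
      · have := chords_bounds _ _ _ hd
        have := chords_bounds _ _ _ he
        simp only [Crossing] at *; omega
      · exact hr _ _ hd _ he hc

theorem base_mem_chords (t : BinaryTree Unit) (i : ℕ) (h : 1 ≤ t.numNodes) :
    (i, i + t.numNodes + 1) ∈ chords t i := by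
  cases t with
  | nil => simp at h
  | node u l r => rw [mem_chords_node]; left; simp [add_assoc]

theorem chords_split_le {u u' : Unit} {l r l' r' : BinaryTree Unit} {i : ℕ}
    (hn : l.numNodes + r.numNodes = l'.numNodes + r'.numNodes)
    (h : chords (.node u l r) i = chords (.node u' l' r') i) :
    l'.numNodes ≤ l.numNodes := by
  by_contra hlt
  have h1 : (i + l.numNodes + 1, i + l.numNodes + 1 + r.numNodes + 1) ∈
      chords (.node u l r) i := by
    rw [mem_chords_node]
    right; right
    exact base_mem_chords r _ (by omega)
  rw [h, mem_chords_node] at h1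
  rcases h1 with h1 | h1 | h1
  · simp only [Prod.mk.injEq] at h1; omega
  · have := chords_bounds _ _ _ h1
    dsimp only at this; omega
  · have := chords_bounds _ _ _ h1
    dsimp only at this; omega

theorem chords_inj (t : BinaryTree Unit) : ∀ (t' : BinaryTree Unit) (i : ℕ),
    t.numNodes = t'.numNodes → chords t i = chords t' i → t = t' := by
  induction t with
  | nil =>
    intro t' i hn _
    cases t' with
    | nil => rfl
    | node u l r => simp at hn
  | node u l r hl hr =>
    intro t' i hn h
    cases t' with
    | nil => simp at hn
    | node u' l' r' =>
      simp only [BinaryTree.numNodes] at hn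
      have e1 : l.numNodes = l'.numNodes :=
        le_antisymm (chords_split_le (by omega) h.symm) (chords_split_le (by omega) h)
      have e2 : r.numNodes = r'.numNodes := by omega
      have hL : chords l i = chords l' i := by
        ext d
        constructor
        · intro hd
          have b := chords_bounds _ _ _ hd
          have hm : d ∈ chords (.node u l r) i := mem_chords_node.2 (Or.inr (Or.inl hd))
          rw [h, mem_chords_node] at hm
          rcases hm with rfl | hm | hm
          · dsimp only at b; omega
          · exact hm
          · have := chords_bounds _ _ _ hm; omega
        · intro hd
          have b := chords_bounds _ _ _ hd
          have hm : d ∈ chords (.node u' l' r') i := mem_chords_node.2 (Or.inr (Or.inl hd))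
          rw [← h, mem_chords_node] at hm
          rcases hm with rfl | hm | hm
          · dsimp only at b; omega
          · exact hm
          · have := chords_bounds _ _ _ hm; omega
      have hR : chords r (i + l.numNodes + 1) = chords r' (i + l.numNodes + 1) := by
        ext d
        constructor
        · intro hd
          have b := chords_bounds _ _ _ hd
          have hm : d ∈ chords (.node u l r) i := mem_chords_node.2 (Or.inr (Or.inr hd))
          rw [h, mem_chords_node, ← e1] at hm
          rcases hm with rfl | hm | hm
          · dsimp only at b; omega
          · have := chords_bounds _ _ _ hm; omega
          · exact hm
        · intro hd
          have b := chords_bounds _ _ _ hd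
          rw [e1] at hd
          have hm : d ∈ chords (.node u' l' r') i := mem_chords_node.2 (Or.inr (Or.inr hd))
          rw [← h, mem_chords_node] at hm
          rcases hm with rfl | hm | hm
          · dsimp only at b; omega
          · have := chords_bounds _ _ _ hm; omega
          · exact hm
      rw [hl l' i e1 hL, hr r' _ e2 hR]

theorem exists_split (i m : ℕ) (S : Finset (ℕ × ℕ))
    (hb : ∀ d ∈ S, i ≤ d.1 ∧ d.1 + 2 ≤ d.2 ∧ d.2 ≤ i + (m + 1) + 1)
    (hc : ∀ d ∈ S, ∀ e ∈ S, ¬ Crossing d e) :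
    ∃ k, i < k ∧ k < i + (m + 1) + 1 ∧
      ∀ d ∈ S, d ≠ (i, i + (m + 1) + 1) → d.2 ≤ k ∨ k ≤ d.1 := by
  classical
  by_cases hne : ((S.erase (i, i + (m + 1) + 1)).filter (fun d => d.1 = i)).Nonempty
  · obtain ⟨⟨x, k⟩, hk, hmax⟩ := Finset.exists_max_image _ (fun d : ℕ × ℕ => d.2) hne
    simp only [Finset.mem_filter, Finset.mem_erase] at hk hmax
    obtain ⟨⟨hk1, hk2⟩, rfl⟩ := hk
    have b := hb _ hk2
    dsimp only at b
    have hk3 : k ≠ x + (m + 1) + 1 := fun h => hk1 (by rw [h])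
    refine ⟨k, by omega, by omega, ?_⟩
    intro d hd hdn
    have bd := hb d hd
    by_cases h1 : d.1 = x
    · left; exact hmax d ⟨⟨hdn, hd⟩, h1⟩
    · by_contra hcon
      apply hc _ hk2 _ hd
      left
      dsimp only
      omega
  · refine ⟨i + 1, by omega, by omega, ?_⟩
    intro d hd hdn
    right
    have bd := hb d hd
    by_contra hcon
    apply hne
    refine ⟨d, ?_⟩
    simp only [Finset.mem_filter, Finset.mem_erase]
    exact ⟨⟨hdn, hd⟩, by omega⟩

theorem chords_surj (m : ℕ) : ∀ (i : ℕ) (S : Finset (ℕ × ℕ)),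
    (∀ d ∈ S, i ≤ d.1 ∧ d.1 + 2 ≤ d.2 ∧ d.2 ≤ i + m + 1) →
    (∀ d ∈ S, ∀ e ∈ S, ¬ Crossing d e) →
    S.card ≤ m ∧ (S.card = m → ∃ t : BinaryTree Unit, t.numNodes = m ∧ chords t i = S) := by
  classical
  induction m using Nat.strong_induction_on with
  | _ m ih =>
  intro i S hb hc
  cases m with
  | zero =>
    have : S = ∅ := by
      rw [Finset.eq_empty_iff_forall_notMem]
      intro d hd
      have := hb d hd
      omega
    subst this
    exact ⟨by simp, fun _ => ⟨.nil, by simp, by simp [chords]⟩⟩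
  | succ m =>
    obtain ⟨k, hk1, hk2, hk⟩ := exists_split i m S hb hc
    have h1 := ih (k - i - 1) (by omega) i (S.filter (fun d => d.2 ≤ k))
      (by intro d hd
          rw [Finset.mem_filter] at hd
          have := hb d hd.1
          omega)
      (by intro d hd e he
          exact hc d (Finset.mem_filter.1 hd).1 e (Finset.mem_filter.1 he).1)
    have h2 := ih (i + m + 1 - k) (by omega) k (S.filter (fun d => k ≤ d.1))
      (by intro d hd
          rw [Finset.mem_filter] at hd
          have := hb d hd.1
          omega)
      (by intro d hd e he
          exact hc d (Finset.mem_filter.1 hd).1 e (Finset.mem_filter.1 he).1)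
    have hsub : S ⊆ insert (i, i + (m + 1) + 1)
        (S.filter (fun d => d.2 ≤ k) ∪ S.filter (fun d => k ≤ d.1)) := by
      intro d hd
      rw [Finset.mem_insert, Finset.mem_union, Finset.mem_filter, Finset.mem_filter]
      by_cases h : d = (i, i + (m + 1) + 1)
      · left; exact h
      · rcases hk d hd h with h' | h'
        · right; left; exact ⟨hd, h'⟩
        · right; right; exact ⟨hd, h'⟩
    have c1 := Finset.card_le_card hsub
    have c2 := Finset.card_insert_le (i, i + (m + 1) + 1)
        (S.filter (fun d => d.2 ≤ k) ∪ S.filter (fun d => k ≤ d.1))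
    have c3 := Finset.card_union_le (S.filter (fun d => d.2 ≤ k)) (S.filter (fun d => k ≤ d.1))
    refine ⟨by omega, fun hS => ?_⟩
    obtain ⟨l, hl1, hl2⟩ := h1.2 (by omega)
    obtain ⟨r, hr1, hr2⟩ := h2.2 (by omega)
    have hbase : (i, i + (m + 1) + 1) ∈ S := by
      by_contra hnot
      have hsub' : S ⊆ S.filter (fun d => d.2 ≤ k) ∪ S.filter (fun d => k ≤ d.1) := by
        intro d hd
        rcases Finset.mem_insert.1 (hsub hd) with h | h
        · rw [h] at hd; exact absurd hd hnot
        · exact h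
      have := Finset.card_le_card hsub'
      omega
    refine ⟨.node () l r, by simp only [BinaryTree.numNodes]; omega, ?_⟩
    have e1 : i + l.numNodes + 1 = k := by omega
    have e2 : l.numNodes + r.numNodes + 1 = m + 1 := by omega
    rw [chords, e1, hl2, hr2, e2]
    apply Finset.Subset.antisymm _ hsub
    intro d hd
    rw [Finset.mem_insert, Finset.mem_union, Finset.mem_filter, Finset.mem_filter] at hd
    rcases hd with rfl | hd | hd
    · exact hbase
    · exact hd.1
    · exact hd.1

/-- The tree encodes a configuration with a chord of length at least `L` avoiding `0`. -/
def AvoidTree (L : ℕ) (t : BinaryTree Unit) : Prop :=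
  ∃ d ∈ chords t 0, 1 ≤ d.1 ∧ L ≤ d.2 - d.1

theorem avoidTree_node {L : ℕ} (hL : 2 ≤ L) (u : Unit) (l r : BinaryTree Unit) :
    AvoidTree L (.node u l r) ↔ AvoidTree L l ∨ L ≤ r.numNodes + 1 := by
  constructor
  · rintro ⟨d, hd, h1, h2⟩
    rw [mem_chords_node] at hd
    rcases hd with rfl | hd | hd
    · simp at h1
    · left; exact ⟨d, hd, h1, h2⟩
    · right
      have := chords_bounds _ _ _ hd
      omega
  · rintro (⟨d, hd, h⟩ | h)
    · exact ⟨d, mem_chords_node.2 (Or.inr (Or.inl hd)), h⟩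
    · refine ⟨_, mem_chords_node.2 (Or.inr (Or.inr (base_mem_chords r _ (by omega)))), ?_, ?_⟩
      · dsimp only; omega
      · dsimp only; omega

theorem avoidTree_numNodes {L : ℕ} {t : BinaryTree Unit} (h : AvoidTree L t) :
    L ≤ t.numNodes := by
  obtain ⟨d, hd, h1, h2⟩ := h
  have := chords_bounds _ _ _ hd
  omega

theorem sum_trees_succ (m : ℕ) (f : BinaryTree Unit → ℕ) :
    ∑ t ∈ BinaryTree.treesOfNumNodesEq (m + 1), f t =
      ∑ pq ∈ Finset.HasAntidiagonal.antidiagonal m, ∑ l ∈ BinaryTree.treesOfNumNodesEq pq.1,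
        ∑ r ∈ BinaryTree.treesOfNumNodesEq pq.2, f (.node () l r) := by
  rw [BinaryTree.treesOfNumNodesEq_succ, Finset.sum_biUnion]
  · apply Finset.sum_congr rfl
    intro pq _
    rw [BinaryTree.pairwiseNode, Finset.sum_map, Finset.sum_product]
    rfl
  · intro a _ b _ hab
    rw [Function.onFun, Finset.disjoint_left]
    intro t h1 h2
    simp only [BinaryTree.pairwiseNode, Finset.mem_map, Finset.mem_product,
      BinaryTree.mem_treesOfNumNodesEq] at h1 h2
    obtain ⟨x, ⟨hx1, hx2⟩, rfl⟩ := h1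
    obtain ⟨y, ⟨hy1, hy2⟩, h⟩ := h2
    apply hab
    have h' : BinaryTree.node () y.1 y.2 = BinaryTree.node () x.1 x.2 := h
    rw [BinaryTree.node.injEq] at h'
    obtain ⟨_, ha, hb⟩ := h'
    ext
    · rw [← hx1, ← hy1, ha]
    · rw [← hx2, ← hy2, hb]

/-- Generating function of the long Catalan numbers. -/
noncomputable def longSeries (L : ℕ) : PowerSeries ℤ :=
  PowerSeries.mk (fun y => if L ≤ y + 1 then (catalan y : ℤ) else 0)

/-- Catalan generating function over the integers. -/
noncomputable def catSeries : PowerSeries ℤ := PowerSeries.mk (fun y => (catalan y : ℤ))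

theorem catSeries_eq : catSeries = 1 + PowerSeries.X * (catSeries * catSeries) := by
  ext n
  cases n with
  | zero => simp [catSeries]
  | succ n =>
    rw [map_add, PowerSeries.coeff_succ_X_mul, PowerSeries.coeff_mul]
    simp [catSeries, PowerSeries.coeff_one, catalan_succ']

open Classical in
theorem count_avoid (L : ℕ) (hL : 2 ≤ L) (m : ℕ) : m + 1 ≤ 2 * L →
    (((BinaryTree.treesOfNumNodesEq m).filter (AvoidTree L)).card : ℤ) =
      PowerSeries.coeff m ((catSeries - 1) * longSeries L) := by
  induction m using Nat.strong_induction_on with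
  | _ m ih =>
  intro hm
  cases m with
  | zero =>
    have : (BinaryTree.treesOfNumNodesEq 0).filter (AvoidTree L) = ∅ := by
      rw [Finset.filter_eq_empty_iff]
      intro t ht h
      rw [BinaryTree.mem_treesOfNumNodesEq] at ht
      have := avoidTree_numNodes h
      omega
    rw [this]
    simp [catSeries]
  | succ m =>
    have key : (catSeries - 1) * longSeries L = PowerSeries.X *
        (((catSeries - 1) * longSeries L) * catSeries + catSeries * longSeries L) := by
      linear_combination (longSeries L) * catSeries_eq
    rw [key, PowerSeries.coeff_succ_X_mul, map_add, PowerSeries.coeff_mul,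
      PowerSeries.coeff_mul _ catSeries, ← Finset.sum_add_distrib,
      Finset.card_filter, sum_trees_succ, Nat.cast_sum]
    apply Finset.sum_congr rfl
    rintro ⟨p, q⟩ hpq
    rw [Finset.HasAntidiagonal.mem_antidiagonal] at hpq
    dsimp only at hpq ⊢
    rw [← ih p (by omega) (by omega)]
    simp only [catSeries, longSeries, PowerSeries.coeff_mk]
    have hcard := BinaryTree.treesOfNumNodesEq_card_eq_catalan
    by_cases hq : L ≤ q + 1
    · have h0 : (BinaryTree.treesOfNumNodesEq p).filter (AvoidTree L) = ∅ := by
        rw [Finset.filter_eq_empty_iff]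
        intro t ht h
        rw [BinaryTree.mem_treesOfNumNodesEq] at ht
        have := avoidTree_numNodes h
        omega
      rw [h0, if_pos hq]
      have : ∀ l ∈ BinaryTree.treesOfNumNodesEq p, ∀ r ∈ BinaryTree.treesOfNumNodesEq q,
          (if AvoidTree L (.node () l r) then 1 else 0) = 1 := by
        intro l _ r hr
        rw [BinaryTree.mem_treesOfNumNodesEq] at hr
        rw [if_pos]
        rw [avoidTree_node hL]
        right; omega
      rw [Finset.sum_congr rfl (fun l hl => Finset.sum_congr rfl (this l hl))]
      simp [hcard]
    · rw [if_neg hq]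
      have : ∀ l ∈ BinaryTree.treesOfNumNodesEq p, ∀ r ∈ BinaryTree.treesOfNumNodesEq q,
          (if AvoidTree L (.node () l r) then 1 else 0) = (if AvoidTree L l then 1 else 0) := by
        intro l _ r hr
        rw [BinaryTree.mem_treesOfNumNodesEq] at hr
        have : AvoidTree L (.node () l r) ↔ AvoidTree L l := by
          rw [avoidTree_node hL]
          constructor
          · rintro (h | h)
            · exact h
            · omega
          · exact Or.inl
        simp only [this]
      rw [Finset.sum_congr rfl (fun l hl => Finset.sum_congr rfl (this l hl))]
      simp only [Finset.sum_const, hcard, smul_eq_mul, mul_zero, add_zero]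
      rw [← Finset.mul_sum, ← Finset.card_filter]
      push_cast
      ring

theorem coeff_closed (L m : ℕ) (hL : 2 ≤ L) :
    PowerSeries.coeff m ((catSeries - 1) * longSeries L) =
      ((∑ x ∈ Finset.Icc 1 (m + 1 - L), catalan x * catalan (m - x) : ℕ) : ℤ) := by
  rw [PowerSeries.coeff_mul, Finset.Nat.sum_antidiagonal_eq_sum_range_succ
    (fun x y => PowerSeries.coeff x (catSeries - 1) * PowerSeries.coeff y (longSeries L)),
    Nat.cast_sum]
  symm
  apply Finset.sum_subset_zero_on_sdiff
  · intro x hx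
    rw [Finset.mem_Icc] at hx
    rw [Finset.mem_range]; omega
  · intro x hx
    rw [Finset.mem_sdiff, Finset.mem_range, Finset.mem_Icc] at hx
    rcases Nat.eq_zero_or_pos x with rfl | hpos
    · simp [catSeries]
    · have : ¬ L ≤ m - x + 1 := by omega
      simp [longSeries, this]
  · intro x hx
    rw [Finset.mem_Icc] at hx
    have h1 : L ≤ m - x + 1 := by omega
    have h2 : x ≠ 0 := by omega
    simp [catSeries, longSeries, h1, h2, PowerSeries.coeff_one]

open Classical in
theorem card_eq_trees (n : ℕ) (hn : 3 ≤ n) :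
    Nat.card {T : Finset (ℕ × ℕ) // IsTriangulation n T ∧ ¬ CentralAvoidsZero n T} =
      ((BinaryTree.treesOfNumNodesEq (n - 2)).filter
        (fun t => ¬ AvoidTree ((n + 1) / 2) t)).card := by
  have himg : {T : Finset (ℕ × ℕ) | IsTriangulation n T ∧ ¬ CentralAvoidsZero n T} =
      (((BinaryTree.treesOfNumNodesEq (n - 2)).filter
        (fun t => ¬ AvoidTree ((n + 1) / 2) t)).image
          (fun t => (chords t 0).erase (0, n - 1)) : Finset (Finset (ℕ × ℕ))) := by
    ext T
    simp only [Set.mem_ofPred_eq, Finset.coe_image, Set.mem_image, Finset.mem_coe,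
      Finset.mem_filter, BinaryTree.mem_treesOfNumNodesEq]
    constructor
    · rintro ⟨⟨hcard, hdiag, hcross⟩, hav⟩
      have hnot : (0, n - 1) ∉ T := by
        intro h
        have := hdiag _ h
        simp only [IsDiagonal] at this
        omega
      have hs := chords_surj (n - 2) 0 (insert (0, n - 1) T)
        (by intro d hd
            rcases Finset.mem_insert.1 hd with rfl | hd
            · dsimp only; omega
            · have := hdiag _ hd
              simp only [IsDiagonal] at this
              omega)
        (by intro d hd e he hc
            rcases Finset.mem_insert.1 hd with rfl | hd
            · rcases Finset.mem_insert.1 he with rfl | he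
              · simp [Crossing] at hc
              · have := hdiag _ he
                simp only [IsDiagonal] at this
                simp only [Crossing] at hc
                omega
            · rcases Finset.mem_insert.1 he with rfl | he
              · have := hdiag _ hd
                simp only [IsDiagonal] at this
                simp only [Crossing] at hc
                omega
              · by_cases hde : d = e
                · subst hde
                  simp only [Crossing] at hc
                  omega
                · exact hcross d hd e he hde hc)
      have hc2 : (insert (0, n - 1) T).card = n - 2 := by
        rw [Finset.card_insert_of_notMem hnot, hcard]; clear hs; omega
      obtain ⟨t, ht1, ht2⟩ := hs.2 hc2
      refine ⟨t, ⟨ht1, ?_⟩, ?_⟩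
      · rintro ⟨d, hd, h1, h2⟩
        apply hav
        rw [ht2] at hd
        rcases Finset.mem_insert.1 hd with rfl | hd
        · simp at h1
        · exact ⟨d, hd, h1, by omega⟩
      · rw [ht2, Finset.erase_insert hnot]
    · rintro ⟨t, ⟨ht1, ht2⟩, rfl⟩
      have hbase : (0, n - 1) ∈ chords t 0 := by
        have := base_mem_chords t 0 (by omega)
        rw [show 0 + t.numNodes + 1 = n - 1 by omega] at this
        exact this
      refine ⟨⟨?_, ?_, ?_⟩, ?_⟩
      · rw [Finset.card_erase_of_mem hbase, chords_card]; omega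
      · rintro ⟨a, b⟩ hd
        rw [Finset.mem_erase] at hd
        have := chords_bounds _ _ _ hd.2
        have hne := hd.1
        simp only [ne_eq, Prod.mk.injEq] at hne
        simp only [IsDiagonal]
        dsimp only at this
        omega
      · intro d hd e he _
        exact chords_noncrossing t 0 d (Finset.mem_of_mem_erase hd) e (Finset.mem_of_mem_erase he)
      · rintro ⟨d, hd, h1, h2⟩
        exact ht2 ⟨d, Finset.mem_of_mem_erase hd, h1, by omega⟩
  rw [show Nat.card {T : Finset (ℕ × ℕ) // IsTriangulation n T ∧ ¬ CentralAvoidsZero n T} =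
    Nat.card ({T : Finset (ℕ × ℕ) | IsTriangulation n T ∧ ¬ CentralAvoidsZero n T} :
      Set (Finset (ℕ × ℕ))) from rfl, himg, Nat.card_coe_set_eq, Set.ncard_coe_finset,
    Finset.card_image_of_injOn]
  intro t ht t' ht' h
  simp only [Finset.coe_filter, Set.mem_ofPred_eq, BinaryTree.mem_treesOfNumNodesEq] at ht ht'
  have hbase : ∀ s : BinaryTree Unit, s.numNodes = n - 2 → (0, n - 1) ∈ chords s 0 := by
    intro s hs
    have := base_mem_chords s 0 (by omega)
    rw [show 0 + s.numNodes + 1 = n - 1 by omega] at this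
    exact this
  apply chords_inj t t' 0 (by rw [ht.1, ht'.1])
  dsimp only at h
  rw [← Finset.insert_erase (hbase t ht.1), h, Finset.insert_erase (hbase t' ht'.1)]

/-- The number of triangulations of a convex `n`-gon whose central component contains
the vertex `0` equals `C_{n-2} - ∑_{m=1}^{⌊n/2⌋-1} C_m C_{n-2-m}`. -/
theorem card_central_contains_zero (n : ℕ) (hn : 3 ≤ n) :
    Nat.card {T : Finset (ℕ × ℕ) // IsTriangulation n T ∧ ¬ CentralAvoidsZero n T} =
      catalan (n - 2) - ∑ m ∈ Finset.Icc 1 (n / 2 - 1), catalan m * catalan (n - 2 - m) := by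
  classical
  rw [card_eq_trees n hn]
  have hsum := Finset.card_filter_add_card_filter_not (s := BinaryTree.treesOfNumNodesEq (n - 2))
    (AvoidTree ((n + 1) / 2))
  have hc := count_avoid ((n + 1) / 2) (by omega) (n - 2) (by omega)
  rw [coeff_closed _ _ (by omega), Nat.cast_inj,
    show n - 2 + 1 - (n + 1) / 2 = n / 2 - 1 by omega] at hc
  rw [BinaryTree.treesOfNumNodesEq_card_eq_catalan] at hsum
  rw [← hc]
  omega
end

section
/- For all n ≥ 2, Q_n = (n+1) * Q_{n/2}^2 + ∑ m_{ijkl} * Q_{(i-1)/2} * Q_{(j-1)/2} * Q_{(k-1)/2} * Q_{(l-1)/2}, where the sum is over quadruples (i,j,k,l) of positive integers with i + j + k + l = 2n + 2 and i ≤ j ≤ k ≤ l < n + 1, with N = 2n+2 and m_{ijkl} = N/4 if i = l; N if (i = k < l) or (i < j = l); 3N/2 if i = j < k = l; 3N if exactly two consecutive (in the ordered quadruple) are equal in the patterns i = j < k < l, i < j = k < l, or i < j < k = l; and 6N if i < j < k < l. Terms with non-integer indices are 0. -/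
/-- `Q_n = (1/(2n+1)) * binomial(3n, n)`, the number of quadrangulations of a
`(2n+2)`-gon. -/
def quadCatalan (n : ℕ) : ℕ := (3 * n).choose n / (2 * n + 1)

/-- `Q_{(i-1)/2}`, with the convention that it is `0` when `i` is even
(i.e. when `(i-1)/2` is not an integer). -/
def quadCatalanHalf (i : ℕ) : ℕ := if i % 2 = 1 then quadCatalan ((i - 1) / 2) else 0


/-- Raney numbers for ternary trees. -/
def raney : ℕ → ℕ → ℕ
  | 0, _ => 1
  | _ + 1, 0 => 0
  | n + 1, r + 1 => raney (n + 1) r + raney n (r + 3)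
termination_by n r => (n, r)

lemma raney_zero (r : ℕ) : raney 0 r = 1 := by rw [raney]
lemma raney_succ_zero (n : ℕ) : raney (n + 1) 0 = 0 := by rw [raney]
lemma raney_succ_succ (n r : ℕ) :
    raney (n + 1) (r + 1) = raney (n + 1) r + raney n (r + 3) := by rw [raney]

lemma raney_closed (n r : ℕ) :
    (3 * n + r) * (n.factorial * (2 * n + r).factorial * raney n r)
      = r * (3 * n + r).factorial := by
  induction n generalizing r with
  | zero => simp [raney_zero]
  | succ n ihn =>
    induction r with
    | zero => simp [raney_succ_zero]
    | succ r ihr =>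
      rw [raney_succ_succ]
      have h1 := ihn (r + 3)
      have e1 : 3 * n + (r + 3) = (3 * n + r + 2) + 1 := by ring
      have e2 : 2 * n + (r + 3) = (2 * n + r + 2) + 1 := by ring
      have e3 : 3 * (n + 1) + r = (3 * n + r + 2) + 1 := by ring
      have e4 : 2 * (n + 1) + r = (2 * n + r + 2) := by ring
      have e5 : 3 * (n + 1) + (r + 1) = (3 * n + r + 2) + 1 + 1 := by ring
      have e6 : 2 * (n + 1) + (r + 1) = (2 * n + r + 2) + 1 := by ring
      rw [e1, e2, Nat.factorial_succ (3 * n + r + 2)] at h1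
      rw [e3, e4, Nat.factorial_succ (3 * n + r + 2)] at ihr
      rw [e5, e6, Nat.factorial_succ (3 * n + r + 2 + 1), Nat.factorial_succ (3 * n + r + 2)]
      have h1' : n.factorial * (2 * n + r + 2 + 1).factorial * raney n (r + 3)
          = (r + 3) * (3 * n + r + 2).factorial := by
        apply Nat.eq_of_mul_eq_mul_left (Nat.succ_pos (3 * n + r + 2))
        rw [Nat.succ_eq_add_one, h1]; ring
      have h2' : (n + 1).factorial * (2 * n + r + 2).factorial * raney (n + 1) r
          = r * (3 * n + r + 2).factorial := by
        apply Nat.eq_of_mul_eq_mul_left (Nat.succ_pos (3 * n + r + 2))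
        rw [Nat.succ_eq_add_one, ihr]; ring
      rw [Nat.factorial_succ (2 * n + r + 2)] at h1' ⊢
      rw [Nat.factorial_succ n] at h2' ⊢
      zify at h1' h2' ⊢
      linear_combination (3 * n + r + 2 + 1 + 1 : ℤ) * (n + 1) * h1'
        + (3 * n + r + 2 + 1 + 1 : ℤ) * (2 * n + r + 2 + 1) * h2'

lemma quadCatalan_eq_raney (n : ℕ) : quadCatalan n = raney n 1 := by
  have h := raney_closed n 1
  have h' : (n.factorial * (2 * n + 1).factorial * raney n 1) = (3 * n).factorial := by
    rw [Nat.factorial_succ (3 * n)] at h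
    apply Nat.eq_of_mul_eq_mul_left (Nat.succ_pos (3 * n))
    rw [Nat.succ_eq_add_one, h]; ring
  have h2 := Nat.choose_mul_factorial_mul_factorial (show n ≤ 3 * n by omega)
  rw [show 3 * n - n = 2 * n by omega] at h2
  unfold quadCatalan
  have h3 : (3 * n).choose n = (2 * n + 1) * raney n 1 := by
    apply Nat.eq_of_mul_eq_mul_right
      (Nat.mul_pos (Nat.factorial_pos n) (Nat.factorial_pos (2 * n)))
    rw [← mul_assoc, h2, ← h', Nat.factorial_succ (2 * n)]; ring
  rw [h3, Nat.mul_div_cancel_left _ (by omega)]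

lemma raney_two (n : ℕ) : (n + 1) * raney n 2 = (3 * n + 1) * raney n 1 := by
  have h1 := raney_closed n 1
  have h2 := raney_closed n 2
  rw [show 3 * n + 2 = 3 * n + 1 + 1 by ring, show 2 * n + 2 = 2 * n + 1 + 1 by ring,
    Nat.factorial_succ (3 * n + 1), Nat.factorial_succ (2 * n + 1)] at h2
  apply Nat.eq_of_mul_eq_mul_left
      (Nat.mul_pos (Nat.factorial_pos n) (Nat.factorial_pos (2 * n + 1)))
  apply Nat.eq_of_mul_eq_mul_left (show 0 < 2 * (3 * n + 1 + 1) by omega)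
  zify at h1 h2 ⊢
  linear_combination h2 - 2 * (3 * n + 1 + 1 : ℤ) * h1

open PowerSeries in
noncomputable def raneyF (r : ℕ) : PowerSeries ℤ := PowerSeries.mk (fun n => (raney n r : ℤ))

open PowerSeries

lemma raneyF_zero : raneyF 0 = 1 := by
  ext n
  cases n <;> simp [raneyF, raney_zero, raney_succ_zero, PowerSeries.coeff_one]

lemma raneyF_succ (r : ℕ) : raneyF (r + 1) = raneyF r + X * raneyF (r + 3) := by
  ext n
  cases n with
  | zero => simp [raneyF, raney_zero]
  | succ n => simp [raneyF, raney_succ_succ, PowerSeries.coeff_succ_X_mul]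

lemma raneyF_mul (r s : ℕ) : raneyF r * raneyF s = raneyF (r + s) := by
  ext n
  induction n generalizing r s with
  | zero => simp [raneyF, raney_zero]
  | succ n ihn =>
    induction r with
    | zero => simp [raneyF_zero]
    | succ r ihr =>
      rw [raneyF_succ, add_mul, map_add, ihr, mul_assoc, PowerSeries.coeff_succ_X_mul, ihn,
        show r + 1 + s = r + s + 1 by ring, raneyF_succ (r + s), map_add,
        PowerSeries.coeff_succ_X_mul, show r + 3 + s = r + s + 3 by ring]

lemma raneyF_pow (r : ℕ) : raneyF 1 ^ r = raneyF r := by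
  induction r with
  | zero => simp [raneyF_zero]
  | succ r ih => rw [pow_succ, ih, raneyF_mul]

noncomputable def headS (n : ℕ) : PowerSeries ℤ :=
  PowerSeries.mk (fun a => if 2 * a < n then (raney a 1 : ℤ) else 0)
noncomputable def tailS (n : ℕ) : PowerSeries ℤ :=
  PowerSeries.mk (fun a => if 2 * a < n then 0 else (raney a 1 : ℤ))

lemma head_add_tail (n : ℕ) : headS n = raneyF 1 - tailS n := by
  ext a; simp only [headS, tailS, raneyF, coeff_mk, map_sub]; split_ifs <;> simp

lemma tail_sq (n : ℕ) : (X : PowerSeries ℤ) ^ n ∣ tailS n ^ 2 := by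
  have h : (X : PowerSeries ℤ) ^ ((n + 1) / 2) ∣ tailS n := by
    rw [PowerSeries.X_pow_dvd_iff]
    intro m hm
    simp only [tailS, coeff_mk]
    rw [if_pos (by omega)]
  refine dvd_trans (pow_dvd_pow _ (show n ≤ (n + 1) / 2 * 2 by omega)) ?_
  rw [pow_mul]
  exact pow_dvd_pow_of_dvd h 2

lemma tail_conv (n : ℕ) : 2 * coeff n (raneyF 1 * tailS n) = coeff n (raneyF 1 ^ 2)
      + (if n % 2 = 0 then (raney (n / 2) 1 : ℤ) ^ 2 else 0) := by
  rw [pow_two, coeff_mul, coeff_mul, two_mul]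
  nth_rewrite 2 [← Finset.Nat.sum_antidiagonal_swap]
  rw [← Finset.sum_add_distrib, ← sub_eq_iff_eq_add', ← Finset.sum_sub_distrib]
  simp only [raneyF, tailS, coeff_mk, Prod.fst_swap, Prod.snd_swap]
  split_ifs with h
  · rw [Finset.sum_eq_single (n / 2, n / 2)]
    · rw [if_neg (by omega)]; ring
    · rintro ⟨a, b⟩ hab hne
      replace hab : a + b = n := Finset.HasAntidiagonal.mem_antidiagonal.mp hab
      simp only [ne_eq, Prod.mk.injEq] at hne
      split_ifs <;> first | omega | ring
    · intro h'
      exact absurd (Finset.HasAntidiagonal.mem_antidiagonal.mpr (show n / 2 + n / 2 = n by omega)) h'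
  · apply Finset.sum_eq_zero
    rintro ⟨a, b⟩ hab
    replace hab : a + b = n := Finset.HasAntidiagonal.mem_antidiagonal.mp hab
    split_ifs <;> first | omega | ring

lemma head_pow (n : ℕ) (hn : 1 ≤ n) :
    2 * (raney n 1 : ℤ) = 2 * (n + 1) * (if n % 2 = 0 then (raney (n / 2) 1 : ℤ) ^ 2 else 0)
      + (n + 1) * coeff (n - 1) (headS n ^ 4) := by
  obtain ⟨m, rfl⟩ : ∃ m, n = m + 1 := ⟨n - 1, by omega⟩
  set n := m + 1 with hnm
  have hm : n - 1 = m := by omega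
  rw [hm]
  set T := raneyF 1 with hT
  set U := tailS n with hU
  have hTX : T = 1 + X * T ^ 3 := by
    rw [hT, raneyF_pow, raneyF_succ, raneyF_zero]
  have e1 : headS n ^ 4 = T ^ 4 - 4 * (T ^ 3 * U) + U ^ 2 * (6 * T ^ 2 - 4 * T * U + U ^ 2) := by
    rw [head_add_tail]; ring
  have e2 : coeff m (U ^ 2 * (6 * T ^ 2 - 4 * T * U + U ^ 2)) = 0 := by
    have := Dvd.dvd.mul_right (tail_sq n) (6 * T ^ 2 - 4 * T * U + U ^ 2)
    rw [X_pow_dvd_iff] at this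
    exact this m (by omega)
  have e3 : coeff m (T ^ 4) = coeff n (T ^ 2) - (raney n 1 : ℤ) := by
    rw [← coeff_succ_X_mul]
    have : X * T ^ 4 = T ^ 2 - T := by linear_combination -T * hTX
    rw [this, map_sub]; simp [T, raneyF, n]
  have e4 : coeff m (T ^ 3 * U) = coeff n (T * U) - (raney n 1 : ℤ) := by
    rw [← coeff_succ_X_mul]
    have : X * (T ^ 3 * U) = T * U - U := by linear_combination -U * hTX
    rw [this, map_sub]
    simp only [U, tailS, coeff_mk]
    rw [if_neg (by omega)]
  have e5 : (n + 1 : ℤ) * coeff n (T ^ 2) = (3 * n + 1) * raney n 1 := by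
    rw [hT, raneyF_pow]
    simp only [raneyF, coeff_mk]
    exact_mod_cast raney_two n
  have e6 := tail_conv n
  have e7 : coeff m (4 * (T ^ 3 * U)) = 4 * coeff m (T ^ 3 * U) := by
    rw [show (4 : PowerSeries ℤ) = C 4 by simp, coeff_C_mul]
  rw [e1, map_add, map_sub, e2, e7, e3, e4]
  linear_combination e5 + 2 * (n + 1 : ℤ) * e6

/-- weight: number of distinct rearrangements of a sorted 4-tuple -/
def wt (f : Fin 4 → ℕ) : ℕ :=
  if f 0 = f 3 then 1
  else if f 0 = f 2 ∨ f 1 = f 3 then 4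
  else if f 0 = f 1 ∧ f 2 = f 3 then 6
  else if f 0 = f 1 ∨ f 1 = f 2 ∨ f 2 = f 3 then 12
  else 24

open Classical in
lemma stab_card (f p : Fin 4 → ℕ) (h : ∀ i j, f i = f j ↔ p i = p j) :
    (Finset.univ.filter (fun σ : Equiv.Perm (Fin 4) => f ∘ σ = f)).card
    = (Finset.univ.filter (fun σ : Equiv.Perm (Fin 4) => ∀ i, p (σ i) = p i)).card := by
  congr 1
  ext σ
  simp [funext_iff, h]

open Classical in
lemma wt_mul_stab (f : Fin 4 → ℕ) (hf : Monotone f) :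
    wt f * (Finset.univ.filter (fun σ : Equiv.Perm (Fin 4) => f ∘ σ = f)).card = 24 := by
  have h01 : f 0 ≤ f 1 := hf (by decide)
  have h12 : f 1 ≤ f 2 := hf (by decide)
  have h23 : f 2 ≤ f 3 := hf (by decide)
  unfold wt
  rcases h01.eq_or_lt with a | a <;> rcases h12.eq_or_lt with b | b <;>
    rcases h23.eq_or_lt with c | c
  · rw [stab_card f ![0,0,0,0] (by simp [Fin.forall_fin_succ]; omega)]
    rw [if_pos (by omega)]; decide
  · rw [stab_card f ![0,0,0,1] (by simp [Fin.forall_fin_succ]; omega)]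
    rw [if_neg (by omega), if_pos (by omega)]; decide
  · rw [stab_card f ![0,0,1,1] (by simp [Fin.forall_fin_succ]; omega)]
    rw [if_neg (by omega), if_neg (by omega), if_pos (by omega)]; decide
  · rw [stab_card f ![0,0,1,2] (by simp [Fin.forall_fin_succ]; omega)]
    rw [if_neg (by omega), if_neg (by omega), if_neg (by omega), if_pos (by omega)]; decide
  · rw [stab_card f ![0,1,1,1] (by simp [Fin.forall_fin_succ]; omega)]
    rw [if_neg (by omega), if_pos (by omega)]; decide
  · rw [stab_card f ![0,1,1,2] (by simp [Fin.forall_fin_succ]; omega)]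
    rw [if_neg (by omega), if_neg (by omega), if_neg (by omega), if_pos (by omega)]; decide
  · rw [stab_card f ![0,1,2,2] (by simp [Fin.forall_fin_succ]; omega)]
    rw [if_neg (by omega), if_neg (by omega), if_neg (by omega), if_pos (by omega)]; decide
  · rw [stab_card f ![0,1,2,3] (by simp [Fin.forall_fin_succ]; omega)]
    rw [if_neg (by omega), if_neg (by omega), if_neg (by omega), if_neg (by omega)]; decide

open Classical in
lemma sum_perm_sorted (f : Fin 4 → ℕ) :
    ∑ σ : Equiv.Perm (Fin 4), (if Monotone (f ∘ σ) then wt (f ∘ σ) else 0) = 24 := by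
  have key : ∀ g : Fin 4 → ℕ, Monotone g →
      ∑ σ : Equiv.Perm (Fin 4), (if Monotone (g ∘ σ) then wt (g ∘ σ) else 0) = 24 := by
    intro g hg
    rw [← wt_mul_stab g hg, Finset.card_filter, Finset.mul_sum]
    refine Finset.sum_congr rfl fun σ _ => ?_
    by_cases h : g ∘ σ = g
    · simp [h, hg]
    · rw [if_neg, if_neg h, mul_zero]
      intro hm
      apply h
      exact Tuple.unique_monotone (σ := σ) (τ := 1) hm (by simpa using hg)
  rw [← key (f ∘ Tuple.sort f) (Tuple.monotone_sort f)]
  exact (Fintype.sum_equiv (Equiv.mulLeft (Tuple.sort f)) _ _ (fun σ => rfl)).symm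

open Classical in
lemma sum_sorted (B : Finset (Fin 4 → ℕ)) (F : (Fin 4 → ℕ) → ℕ)
    (hB : ∀ (σ : Equiv.Perm (Fin 4)) f, f ∈ B → f ∘ σ ∈ B)
    (hF : ∀ (σ : Equiv.Perm (Fin 4)) f, F (f ∘ σ) = F f) :
    ∑ f ∈ B, F f = ∑ f ∈ B with Monotone f, wt f * F f := by
  apply Nat.eq_of_mul_eq_mul_left (show 0 < 24 by norm_num)
  calc 24 * ∑ f ∈ B, F f
      = ∑ f ∈ B, ∑ σ : Equiv.Perm (Fin 4),
          (if Monotone (f ∘ σ) then wt (f ∘ σ) else 0) * F (f ∘ σ) := by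
        rw [Finset.mul_sum]
        refine Finset.sum_congr rfl fun f _ => ?_
        simp only [hF]
        rw [← Finset.sum_mul, sum_perm_sorted]
    _ = ∑ σ : Equiv.Perm (Fin 4), ∑ f ∈ B, (if Monotone f then wt f else 0) * F f := by
        rw [Finset.sum_comm]
        refine Finset.sum_congr rfl fun σ _ => ?_
        refine Finset.sum_nbij' (fun f => f ∘ σ) (fun f => f ∘ σ.symm) ?_ ?_ ?_ ?_ ?_
        · intro f hf; exact hB σ f hf
        · intro f hf; exact hB σ.symm f hf
        · intro f _; ext i; simp
        · intro f _; ext i; simp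
        · intro f _; rfl
    _ = _ := by
        rw [Finset.sum_const, Finset.card_univ, Fintype.card_perm, Fintype.card_fin,
          Finset.sum_filter, smul_eq_mul]
        congr 1
        refine Finset.sum_congr rfl fun f _ => ?_
        split_ifs <;> simp

def gq (n i : ℕ) : ℕ := if i < n + 1 then quadCatalanHalf i else 0

def boxB (n : ℕ) : Finset (Fin 4 → ℕ) :=
  (Fintype.piFinset (fun _ : Fin 4 => Finset.Icc 1 (2 * n + 2))).filter
    (fun f => ∑ i, f i = 2 * n + 2)

lemma mem_boxB (n : ℕ) (f : Fin 4 → ℕ) :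
    f ∈ boxB n ↔ (∀ i, 1 ≤ f i) ∧ ∑ i, f i = 2 * n + 2 := by
  simp only [boxB, Finset.mem_filter, Fintype.mem_piFinset, Finset.mem_Icc]
  refine ⟨fun h => ⟨fun i => (h.1 i).1, h.2⟩, fun h => ⟨fun i => ⟨h.1 i, ?_⟩, h.2⟩⟩
  rw [← h.2]
  exact Finset.single_le_sum (f := f) (fun _ _ => Nat.zero_le _) (Finset.mem_univ i)

lemma coeff_head (n : ℕ) (hn : 1 ≤ n) :
    coeff (n - 1) (headS n ^ 4) = ((∑ f ∈ boxB n, ∏ i, gq n (f i) : ℕ) : ℤ) := by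
  have e : headS n ^ 4 = ∏ _i : Fin 4, headS n := by simp
  rw [e, coeff_prod, Nat.cast_sum]
  refine Finset.sum_of_injOn (fun l i => 2 * l i + 1) ?_ ?_ ?_ ?_
  · intro l _ l' _ h
    ext i
    have := congrFun h i
    simp only at this
    omega
  · intro l hl
    simp only [Finset.mem_coe, Finset.mem_finsuppAntidiag] at hl
    simp only [Finset.mem_coe, mem_boxB]
    have h1 := hl.1
    rw [Fin.sum_univ_four] at h1 ⊢
    exact ⟨fun i => by omega, by omega⟩
  · intro f hf hne
    rw [mem_boxB] at hf
    by_cases hodd : ∀ i, f i % 2 = 1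
    · exfalso
      apply hne
      refine ⟨Finsupp.equivFunOnFinite.symm (fun i => f i / 2), ?_, ?_⟩
      · simp only [Finset.mem_coe, Finset.mem_finsuppAntidiag]
        have h2 := hf.2
        refine ⟨?_, by simp⟩
        rw [Fin.sum_univ_four] at h2 ⊢
        have := hodd 0
        have := hodd 1
        have := hodd 2
        have := hodd 3
        simp only [Finsupp.equivFunOnFinite_symm_apply_apply]
        omega
      · ext i
        have := hodd i
        simp only [Finsupp.equivFunOnFinite_symm_apply_apply]
        omega
    · push Not at hodd
      obtain ⟨i, hi⟩ := hodd
      rw [Nat.cast_eq_zero]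
      apply Finset.prod_eq_zero (Finset.mem_univ i)
      simp [gq, quadCatalanHalf, hi]
  · intro l _
    rw [Nat.cast_prod]
    refine Finset.prod_congr rfl fun i _ => ?_
    simp only [headS, coeff_mk, gq, quadCatalanHalf]
    have h1 : (2 * l i + 1) % 2 = 1 := by omega
    have h2 : (2 * l i + 1 - 1) / 2 = l i := by omega
    rw [h1, h2, if_pos rfl, quadCatalan_eq_raney]
    by_cases h : 2 * l i < n
    · rw [if_pos h, if_pos (by omega)]
    · rw [if_neg h, if_neg (by omega)]; rfl

lemma boxB_sorted (n : ℕ) :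
    ∑ f ∈ boxB n, ∏ i, gq n (f i) =
      ∑ t ∈ (Finset.Icc 1 (2 * n + 2) ×ˢ Finset.Icc 1 (2 * n + 2) ×ˢ
            Finset.Icc 1 (2 * n + 2) ×ˢ Finset.Icc 1 (2 * n + 2)).filter
          (fun t => t.1 + t.2.1 + t.2.2.1 + t.2.2.2 = 2 * n + 2 ∧
            t.1 ≤ t.2.1 ∧ t.2.1 ≤ t.2.2.1 ∧ t.2.2.1 ≤ t.2.2.2 ∧ t.2.2.2 < n + 1),
        wt ![t.1, t.2.1, t.2.2.1, t.2.2.2] *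
          (quadCatalanHalf t.1 * quadCatalanHalf t.2.1 *
            quadCatalanHalf t.2.2.1 * quadCatalanHalf t.2.2.2) := by
  classical
  rw [sum_sorted (boxB n) (fun f => ∏ i, gq n (f i))]
  · symm
    refine Finset.sum_of_injOn (fun t => ![t.1, t.2.1, t.2.2.1, t.2.2.2]) ?_ ?_ ?_ ?_
    · rintro ⟨a, b, c, d⟩ _ ⟨a', b', c', d'⟩ _ h
      have h0 := congrFun h 0
      have h1 := congrFun h 1
      have h2 := congrFun h 2
      have h3 := congrFun h 3
      simp at h0 h1 h2 h3
      simp [h0, h1, h2, h3]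
    · rintro ⟨a, b, c, d⟩ h
      simp only [Finset.coe_filter, Set.mem_ofPred_eq, Finset.mem_product, Finset.mem_Icc] at h
      simp only [Finset.coe_filter, Set.mem_ofPred_eq, mem_boxB, Fin.sum_univ_four]
      refine ⟨⟨?_, ?_⟩, ?_⟩
      · simp [Fin.forall_fin_succ]; omega
      · simpa using h.2.1
      · rw [Fin.monotone_iff_le_succ]
        simp [Fin.forall_fin_succ]; omega
    · intro f hf hne
      rw [Finset.mem_filter, mem_boxB, Fin.sum_univ_four] at hf
      obtain ⟨⟨hf1, hf2⟩, hf3⟩ := hf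
      have h01 : f 0 ≤ f 1 := hf3 (by decide)
      have h12 : f 1 ≤ f 2 := hf3 (by decide)
      have h23 : f 2 ≤ f 3 := hf3 (by decide)
      have p0 := hf1 0
      have p1 := hf1 1
      have p2 := hf1 2
      have p3 := hf1 3
      by_cases h : f 3 < n + 1
      · exfalso
        apply hne
        refine ⟨(f 0, f 1, f 2, f 3), ?_, ?_⟩
        · simp only [Finset.coe_filter, Set.mem_ofPred_eq, Finset.mem_product, Finset.mem_Icc]
          omega
        · ext i; fin_cases i <;> rfl
      · rw [Finset.prod_eq_zero (Finset.mem_univ 3), mul_zero]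
        simp [gq, h]
    · rintro ⟨a, b, c, d⟩ h
      simp only [Finset.mem_filter, Finset.mem_product, Finset.mem_Icc] at h
      have ha : a < n + 1 := by omega
      have hb : b < n + 1 := by omega
      have hc : c < n + 1 := by omega
      have hd : d < n + 1 := by omega
      simp only [Fin.prod_univ_four, gq]
      change _ = _ * ((if a < n + 1 then _ else _) * (if b < n + 1 then _ else _) *
        (if c < n + 1 then _ else _) * (if d < n + 1 then _ else _))
      rw [if_pos ha, if_pos hb, if_pos hc, if_pos hd]
      rfl
  · intro σ f hf
    rw [mem_boxB] at hf ⊢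
    refine ⟨fun i => hf.1 _, ?_⟩
    rw [← hf.2]
    exact Equiv.sum_comp σ f
  · intro σ f
    exact Equiv.prod_comp σ (fun i => gq n (f i))

lemma coef_eq (n a b c d : ℕ) (h : a + b + c + d = 2 * n + 2)
    (h1 : a ≤ b) (h2 : b ≤ c) (h3 : c ≤ d) :
    2 * ((if a = d then (2 * n + 2) / 4
          else if a = c ∨ b = d then 2 * n + 2
          else if a = b ∧ c = d then 3 * (2 * n + 2) / 2
          else if a = b ∨ b = c ∨ c = d then 3 * (2 * n + 2)
          else 6 * (2 * n + 2)) *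
      (quadCatalanHalf a * quadCatalanHalf b * quadCatalanHalf c * quadCatalanHalf d))
    = (n + 1) * (wt ![a, b, c, d] *
      (quadCatalanHalf a * quadCatalanHalf b * quadCatalanHalf c * quadCatalanHalf d)) := by
  have hw : wt ![a, b, c, d] = if a = d then 1
      else if a = c ∨ b = d then 4
      else if a = b ∧ c = d then 6
      else if a = b ∨ b = c ∨ c = d then 12
      else 24 := rfl
  rw [hw]
  generalize hq : quadCatalanHalf a * quadCatalanHalf b * quadCatalanHalf c * quadCatalanHalf d = q
  split_ifs with g1 g2 g3 g4
  · by_cases ho : a % 2 = 1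
    · have : 2 * ((2 * n + 2) / 4) = n + 1 := by omega
      rw [← mul_assoc, this, one_mul]
    · have : q = 0 := by rw [← hq]; simp [quadCatalanHalf, ho]
      simp [this]
  · ring
  · rw [show 3 * (2 * n + 2) / 2 = 3 * (n + 1) by omega]; ring
  · ring
  · ring

/-- The central-component recursion for quadrangulations: for `n ≥ 2`,
`Q_n = (n+1) Q_{n/2}^2 + ∑ m_{ijkl} Q_{(i-1)/2} Q_{(j-1)/2} Q_{(k-1)/2} Q_{(l-1)/2}`,
summed over `i + j + k + l = 2n + 2`, `i ≤ j ≤ k ≤ l < n + 1`, with `N = 2n + 2` and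
`m_{ijkl} = N/4` if `i = l`; `N` if `i = k < l` or `i < j = l`; `3N/2` if `i = j < k = l`;
`3N` if `i = j < k < l`, `i < j = k < l`, or `i < j < k = l`; and `6N` if `i < j < k < l`.
The first term is `0` when `n` is odd. -/
theorem quadCatalan_central_recursion (n : ℕ) (hn : 2 ≤ n) :
    quadCatalan n =
      (if n % 2 = 0 then (n + 1) * quadCatalan (n / 2) ^ 2 else 0) +
      ∑ t ∈ (Finset.Icc 1 (2 * n + 2) ×ˢ Finset.Icc 1 (2 * n + 2) ×ˢ
            Finset.Icc 1 (2 * n + 2) ×ˢ Finset.Icc 1 (2 * n + 2)).filter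
          (fun t => t.1 + t.2.1 + t.2.2.1 + t.2.2.2 = 2 * n + 2 ∧
            t.1 ≤ t.2.1 ∧ t.2.1 ≤ t.2.2.1 ∧ t.2.2.1 ≤ t.2.2.2 ∧ t.2.2.2 < n + 1),
        (if t.1 = t.2.2.2 then (2 * n + 2) / 4
          else if t.1 = t.2.2.1 ∨ t.2.1 = t.2.2.2 then 2 * n + 2
          else if t.1 = t.2.1 ∧ t.2.2.1 = t.2.2.2 then 3 * (2 * n + 2) / 2
          else if t.1 = t.2.1 ∨ t.2.1 = t.2.2.1 ∨ t.2.2.1 = t.2.2.2 then 3 * (2 * n + 2)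
          else 6 * (2 * n + 2)) *
          (quadCatalanHalf t.1 * quadCatalanHalf t.2.1 *
            quadCatalanHalf t.2.2.1 * quadCatalanHalf t.2.2.2) := by
  have hp := head_pow n (by omega)
  rw [coeff_head n (by omega), boxB_sorted] at hp
  simp only [quadCatalan_eq_raney n, quadCatalan_eq_raney (n / 2)]
  apply Nat.eq_of_mul_eq_mul_left (show 0 < 2 by norm_num)
  rw [mul_add, Finset.mul_sum]
  rw [Finset.sum_congr rfl (g := fun t : ℕ × ℕ × ℕ × ℕ =>
    (n + 1) * (wt ![t.1, t.2.1, t.2.2.1, t.2.2.2] *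
          (quadCatalanHalf t.1 * quadCatalanHalf t.2.1 *
            quadCatalanHalf t.2.2.1 * quadCatalanHalf t.2.2.2))) ?_]
  · rw [← Finset.mul_sum]
    generalize (Finset.sum (ι := ℕ × ℕ × ℕ × ℕ) (M := ℕ) _ _) = S at hp ⊢
    zify
    split_ifs at hp ⊢ <;> first | omega | linear_combination hp
  · rintro ⟨a, b, c, d⟩ ht
    simp only [Finset.mem_filter] at ht
    exact coef_eq n a b c d ht.2.1 ht.2.2.1 ht.2.2.2.1 ht.2.2.2.2.1
end
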